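/- arXiv:2504.12145 — 2 statements merged into one kernel-verified Lean document; each statement's English description precedes it below -/
import Mathlib

section
/- Let g(x) be an atom of ℕ₀[x]* that is not a prime element of ℕ₀[x]*, and let z(x) ∈ ℤ[x]\ℕ₀[x] be irreducible in ℤ[x] with g(x)·z(x) ∈ ℕ₀[x]*. Then for every prime element f(x) of ℕ₀[x]*, f(x) does not divide g(x)·z(x) in ℕ₀[x]* (f ∤_ℕ g·z). -/
open Polynomial

/-- `f ∈ ℕ₀[x]`: all coefficients of `f` are nonnegative. -/
def NNPoly (f : Polynomial ℤ) : Prop := ∀ n, 0 ≤ f.coeff n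

/-- `f ∈ ℕ₀[x]* = ℕ₀[x] \ {0}`. -/
def NNStar (f : Polynomial ℤ) : Prop := NNPoly f ∧ f ≠ 0

/-- `f ∣_ℕ g`: divisibility in the monoid `ℕ₀[x]*`. -/
def DvdN (f g : Polynomial ℤ) : Prop := ∃ h, NNStar h ∧ g = f * h

/-- `f` is an atom of the monoid `ℕ₀[x]*`. -/
def IsAtomN (f : Polynomial ℤ) : Prop :=
  NNStar f ∧ f ≠ 1 ∧ ∀ g h, NNStar g → NNStar h → f = g * h → g = 1 ∨ h = 1

/-- `f` is a prime element of the monoid `ℕ₀[x]*`. -/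
def IsPrimeN (f : Polynomial ℤ) : Prop :=
  IsAtomN f ∧ ∀ g h, NNStar g → NNStar h → DvdN f (g * h) → DvdN f g ∨ DvdN f h

theorem NNPoly.add' {f g : Polynomial ℤ} (hf : NNPoly f) (hg : NNPoly g) : NNPoly (f + g) := by
  intro n
  rw [coeff_add]
  exact add_nonneg (hf n) (hg n)

theorem NNPoly.mul' {f g : Polynomial ℤ} (hf : NNPoly f) (hg : NNPoly g) : NNPoly (f * g) := by
  intro n
  rw [coeff_mul]
  exact Finset.sum_nonneg fun p _ => mul_nonneg (hf _) (hg _)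

theorem nnC {c : ℤ} (hc : 0 ≤ c) : NNPoly (C c) := by
  intro n
  rw [coeff_C]
  split_ifs <;> simp [hc]

theorem nnXpow (k : ℕ) : NNPoly (X ^ k) := by
  intro n
  rw [coeff_X_pow]
  split_ifs <;> simp

theorem nnSum (s : Finset ℕ) : NNPoly (∑ i ∈ s, X ^ i) := by
  intro n
  rw [finsetSum_coeff]
  exact Finset.sum_nonneg fun i _ => nnXpow i n

theorem nn_bound {f : Polynomial ℤ} (hf : NNPoly f) : ∃ M : ℤ, 0 ≤ M ∧ ∀ i, f.coeff i ≤ M := by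
  refine ⟨∑ i ∈ f.support, f.coeff i, Finset.sum_nonneg fun i _ => hf i, fun i => ?_⟩
  by_cases hi : i ∈ f.support
  · exact Finset.single_le_sum (f := fun i => f.coeff i) (fun j _ => hf j) hi
  · rw [notMem_support_iff.1 hi]
    exact Finset.sum_nonneg fun i _ => hf i

/-- A prime element of the monoid cannot have two terms. -/
theorem prime_no_two {f : Polynomial ℤ} (hf : IsPrimeN f) {a b : ℕ} (hab : a ≠ b)
    (ha : f.coeff a ≠ 0) (hb : f.coeff b ≠ 0) : False := by
  obtain ⟨⟨⟨hnn, hf0⟩, hf1, -⟩, hp⟩ := hf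
  obtain ⟨M, hM0, hM⟩ := nn_bound hnn
  set n := f.natDegree with hn
  have hale : a ≤ n := le_natDegree_of_ne_zero ha
  have hble : b ≤ n := le_natDegree_of_ne_zero hb
  have hnpos : n ≠ 0 := by omega
  set R : Polynomial ℤ := ∑ i ∈ (Finset.range (2 * n + 1)).erase n, X ^ i with hR
  have hRnn : NNPoly R := nnSum _
  set z : Polynomial ℤ := C M * R + (1 + (X ^ n) ^ 2 - X ^ n) with hz
  have hone : NNPoly (1 : Polynomial ℤ) := by simpa using nnC (c := 1) (by norm_num)
  have hy2 : NNPoly ((X ^ n) ^ 2 : Polynomial ℤ) := by rw [← pow_mul]; exact nnXpow _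
  have hzc : z.coeff n = -1 := by
    have h1 : R.coeff n = 0 := by
      rw [hR, finsetSum_coeff]
      refine Finset.sum_eq_zero fun i hi => ?_
      rw [coeff_X_pow, if_neg]
      exact (Finset.ne_of_mem_erase hi).symm
    rw [hz, coeff_add, coeff_C_mul, h1, ← pow_mul, coeff_sub, coeff_add, coeff_X_pow,
      coeff_X_pow, coeff_one, if_neg hnpos, if_neg (by omega), if_pos rfl]
    norm_num
  have hznn : ¬ NNPoly z := by
    intro h
    have := h n
    omega
  have hz0 : z ≠ 0 := by
    intro h
    rw [h] at hzc
    simp at hzc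
  have hfz : NNPoly (f * z) := by
    intro j
    have e : f * z = C M * (f * R) + f * (1 + (X ^ n) ^ 2) - f * X ^ n := by rw [hz]; ring
    have h2 := (hnn.mul' (hone.add' hy2)) j
    have h3 := (hnn.mul' hRnn) j
    rw [e, coeff_sub, coeff_add, coeff_C_mul, coeff_mul_X_pow']
    split_ifs with hj
    · by_cases hi : f.coeff (j - n) = 0
      · rw [hi]
        have := mul_nonneg hM0 h3
        omega
      · have hin : j - n ≤ n := le_natDegree_of_ne_zero hi
        obtain ⟨c, hcn, hc, hcj⟩ : ∃ c, c ≤ n ∧ f.coeff c ≠ 0 ∧ c ≠ j - n := by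
          by_cases h : a = j - n
          · exact ⟨b, hble, hb, by omega⟩
          · exact ⟨a, hale, ha, h⟩
        have hc1 : 1 ≤ f.coeff c := by
          have := hnn c
          omega
        have h4 : f.coeff c ≤ (f * R).coeff j := by
          rw [hR, Finset.mul_sum, finsetSum_coeff]
          have hmem : j - c ∈ (Finset.range (2 * n + 1)).erase n := by
            rw [Finset.mem_erase, Finset.mem_range]
            omega
          have := Finset.single_le_sum (f := fun i => (f * X ^ i).coeff j)
            (fun i _ => (hnn.mul' (nnXpow i)) j) hmem
          refine le_trans (le_of_eq ?_) this
          rw [coeff_mul_X_pow', if_pos (by omega)]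
          congr 1
          omega
        have h5 := hM (j - n)
        nlinarith
    · have := mul_nonneg hM0 h3
      omega
  have key : ∀ h : Polynomial ℤ, NNStar h → NNPoly ((1 + (X ^ n) ^ 2 - X ^ n) * h) → f ∣ h := by
    intro h hh hzh
    have hzh' : NNPoly (z * h) := by
      have : z * h = C M * R * h + (1 + (X ^ n) ^ 2 - X ^ n) * h := by rw [hz]; ring
      rw [this]
      exact (((nnC hM0).mul' hRnn).mul' hh.1).add' hzh
    rcases hp (f * z) h ⟨hfz, mul_ne_zero hf0 hz0⟩ hh
      ⟨z * h, ⟨hzh', mul_ne_zero hz0 hh.2⟩, by ring⟩ with ⟨w, hw, e⟩ | ⟨w, hw, e⟩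
    · exact absurd (mul_left_cancel₀ hf0 e ▸ hw.1) hznn
    · exact ⟨w, e⟩
  have nz : ∀ c : ℤ, 0 < c → NNStar (X ^ n + C c : Polynomial ℤ) := by
    intro c hc
    refine ⟨(nnXpow n).add' (nnC hc.le), fun h => ?_⟩
    have h' := congrArg (fun p => coeff p n) h
    simp only [coeff_add, coeff_X_pow, coeff_C, if_neg hnpos, coeff_zero, if_true] at h'
    omega
  have d1 : f ∣ X ^ n + C 1 := by
    refine key _ (nz 1 (by norm_num)) ?_
    have : (1 + (X ^ n) ^ 2 - X ^ n) * (X ^ n + C 1) = (X ^ (3 * n) + C 1 : Polynomial ℤ) := by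
      rw [mul_comm 3 n, pow_mul, C_1]; ring
    rw [this]
    exact (nnXpow _).add' (nnC (by norm_num))
  have d2 : f ∣ (X ^ n + C 2) * (X ^ n + C 2) := by
    have h2 := nz 2 (by norm_num)
    refine key _ ⟨h2.1.mul' h2.1, mul_ne_zero h2.2 h2.2⟩ ?_
    have : (1 + (X ^ n) ^ 2 - X ^ n) * ((X ^ n + C 2) * (X ^ n + C 2)) =
        (X ^ (n * 4) + C 3 * X ^ (n * 3) + X ^ (n * 2) + C 4 : Polynomial ℤ) := by
      rw [pow_mul, pow_mul, pow_mul]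
      have e2 : (C 2 : Polynomial ℤ) = 2 := rfl
      have e3 : (C 3 : Polynomial ℤ) = 3 := rfl
      have e4 : (C 4 : Polynomial ℤ) = 4 := rfl
      rw [e2, e3, e4]; ring
    rw [this]
    exact (((nnXpow _).add' ((nnC (by norm_num)).mul' (nnXpow _))).add' (nnXpow _)).add'
      (nnC (by norm_num))
  have d3 : f ∣ 1 := by
    have e2 : (C 2 : Polynomial ℤ) = 2 := rfl
    have : (1 : Polynomial ℤ) = (X ^ n + C 2) * (X ^ n + C 2) - (X ^ n + C 1) * (X ^ n + 3) := by
      rw [e2, C_1]; ring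
    rw [this]
    exact dvd_sub d2 (d1.mul_right _)
  have := natDegree_eq_zero_of_isUnit (isUnit_of_dvd_one d3)
  omega

theorem primeN_prime {f : Polynomial ℤ} (hf : IsPrimeN f) :
    Prime f ∧ ∀ w, NNPoly (f * w) → NNPoly w := by
  have htwo : ∀ i, i ≠ f.natDegree → f.coeff i = 0 := by
    intro i hi
    by_contra h
    refine prime_no_two hf hi h ?_
    have : f.leadingCoeff ≠ 0 := leadingCoeff_ne_zero.2 hf.1.1.2
    exact this
  set k := f.natDegree with hk
  set c := f.coeff k with hc
  have hfe : f = C c * X ^ k := by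
    ext i
    rw [coeff_C_mul, coeff_X_pow]
    split_ifs with h
    · rw [h, mul_one]
    · rw [htwo i h, mul_zero]
  have hc0 : 0 ≤ c := hf.1.1.1 k
  have hcne : c ≠ 0 := by
    intro h
    apply hf.1.1.2
    rw [hfe, h]
    simp
  have hcpos : 0 < c := by omega
  have starC : ∀ d : ℤ, 0 < d → NNStar (C d) := fun d hd => ⟨nnC hd.le, by simpa using hd.ne'⟩
  have starX : ∀ d : ℕ, NNStar (X ^ d : Polynomial ℤ) := fun d => ⟨nnXpow d, pow_ne_zero _ X_ne_zero⟩
  constructor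
  · rcases hf.1.2.2 _ _ (starC c hcpos) (starX k) hfe with h | h
    · rw [h, one_mul] at hfe
      rcases Nat.eq_zero_or_pos k with h0 | h0
      · exact absurd (by rw [hfe, h0, pow_zero]) hf.1.2.1
      · have e : f = X ^ 1 * X ^ (k - 1) := by
          rw [← pow_add, hfe]
          congr 1
          omega
        rcases hf.1.2.2 _ _ (starX 1) (starX (k - 1)) e with h' | h'
        · rw [pow_one] at h'
          exact absurd (h' ▸ prime_X : Prime (1 : Polynomial ℤ)) not_prime_one
        · rw [e, h', mul_one, pow_one]
          exact prime_X
    · rw [h, mul_one] at hfe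
      rw [hfe, prime_C_iff]
      have hc1 : c ≠ 1 := by
        intro h1
        apply hf.1.2.1
        rw [hfe, h1, C_1]
      lift c to ℕ using hc0 with m hm
      rw [← Nat.prime_iff_prime_int, Nat.prime_def]
      refine ⟨?_, ?_⟩
      · norm_cast at *
        omega
      · rintro a ⟨b, rfl⟩
        have ha : 0 < a := Nat.pos_of_ne_zero (by rintro rfl; simp at hcne)
        have hb : 0 < b := Nat.pos_of_ne_zero (by rintro rfl; simp at hcne)
        have e : f = C (a : ℤ) * C (b : ℤ) := by
          rw [hfe, ← C_mul]
          push_cast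
          rfl
        rcases hf.1.2.2 _ _ (starC a (by exact_mod_cast ha)) (starC b (by exact_mod_cast hb)) e
          with h' | h'
        · left
          rw [← C_1] at h'
          exact_mod_cast C_injective h'
        · right
          rw [← C_1] at h'
          have : b = 1 := by exact_mod_cast C_injective h'
          rw [this, mul_one]
  · intro w hw i
    have h := hw (i + k)
    rw [hfe, mul_assoc, coeff_C_mul, mul_comm (X ^ k), coeff_mul_X_pow] at h
    exact nonneg_of_mul_nonneg_right h hcpos

/-- If `g` is an atom of `ℕ₀[x]*` which is not a prime element, and `z ∈ ℤ[x] \ ℕ₀[x]` is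
irreducible in `ℤ[x]` with `g·z ∈ ℕ₀[x]*`, then no prime element `f` of `ℕ₀[x]*`
divides `g·z` in `ℕ₀[x]*`. -/
theorem stmt6 (g z : Polynomial ℤ) (hg : IsAtomN g) (hgp : ¬ IsPrimeN g)
    (hz : ¬ NNPoly z) (hzirr : Irreducible z) (hgz : NNStar (g * z)) :
    ∀ f : Polynomial ℤ, IsPrimeN f → ¬ DvdN f (g * z) := by
  rintro f hf ⟨h, hh, e⟩
  obtain ⟨hpr, hq⟩ := primeN_prime hf
  rcases hpr.dvd_or_dvd ⟨h, e⟩ with ⟨w, hw⟩ | hd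
  · have hwn : NNPoly w := hq w (hw ▸ hg.1.1)
    have hw0 : w ≠ 0 := by
      rintro rfl
      exact hg.1.2 (by rw [hw, mul_zero])
    rcases hg.2.2 f w hf.1.1 ⟨hwn, hw0⟩ hw with h1 | h1
    · exact hf.1.2.1 h1
    · rw [h1, mul_one] at hw
      exact hgp (hw ▸ hf)
  · obtain ⟨u, hu⟩ := (hpr.irreducible.associated_of_dvd hzirr hd)
    obtain ⟨r, hr, hr'⟩ := Polynomial.isUnit_iff.1 u.isUnit
    rcases Int.isUnit_iff.1 hr with rfl | rfl
    · rw [C_1] at hr'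
      rw [← hr', mul_one] at hu
      exact hz (hu ▸ hf.1.1.1)
    · have hzf : z = -f := by
        rw [← hu, ← hr']
        simp
      apply hgz.2
      ext i
      have h1 := hgz.1 i
      have h2 := (hg.1.1.mul' hf.1.1.1) i
      rw [hzf, mul_neg, coeff_neg] at h1
      rw [hzf, mul_neg, coeff_neg, coeff_zero]
      omega
end

section
/- A finitely generated ideal of the monoid ℕ₀[x]* is a prime ideal if and only if it is empty or it is generated by a finite set of prime elements of ℕ₀[x]*; that is, the only nonempty finitely generated prime ideals of ℕ₀[x]* are (x), and the ideals of the form (p₁,…,pₙ) or (p₁,…,pₙ,x), where p₁,…,pₙ are prime numbers. -/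
open Polynomial

/-- The underlying set of the monoid `ℕ₀[x]*`. -/
def NNSet : Set (Polynomial ℤ) := {f | NNStar f}

/-- The ideal of `ℕ₀[x]*` generated by a finite set `s`, namely `⋃_{g ∈ s} g·ℕ₀[x]*`. -/
def genSet (s : Finset (Polynomial ℤ)) : Set (Polynomial ℤ) := {f | ∃ g ∈ s, DvdN g f}

/-- `I` is a prime ideal of the monoid `ℕ₀[x]*`: a proper subset `P` such that for all
`x, y` in the monoid, `x·y ∈ P` iff `x ∈ P` or `y ∈ P`. -/
def IsPrimeIdealN (I : Set (Polynomial ℤ)) : Prop :=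
  I ⊆ NNSet ∧ I ≠ NNSet ∧
    ∀ x y, NNStar x → NNStar y → (x * y ∈ I ↔ x ∈ I ∨ y ∈ I)


lemma nn_pos_lead {f : ℤ[X]} (hf : NNStar f) : 0 < f.leadingCoeff :=
  lt_of_le_of_ne (hf.1 _) (Ne.symm (leadingCoeff_ne_zero.mpr hf.2))

lemma nn_unit {f : ℤ[X]} (hf : NNStar f) (hu : IsUnit f) : f = 1 := by
  obtain ⟨r, hr, rfl⟩ := Polynomial.isUnit_iff.mp hu
  have h0 := hf.1 0
  rw [coeff_C_zero] at h0
  rcases Int.isUnit_iff.mp hr with h | h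
  · simp [h]
  · omega

lemma nn_mul {f g : ℤ[X]} (hf : NNStar f) (hg : NNStar g) : NNStar (f * g) := by
  refine ⟨fun n => ?_, mul_ne_zero hf.2 hg.2⟩
  rw [coeff_mul]
  exact Finset.sum_nonneg fun x _ => mul_nonneg (hf.1 _) (hg.1 _)

lemma nn_one : NNStar (1 : ℤ[X]) := by
  refine ⟨fun n => ?_, one_ne_zero⟩
  rw [coeff_one]; split_ifs <;> norm_num

lemma nn_X : NNStar (X : ℤ[X]) := by
  refine ⟨fun n => ?_, X_ne_zero⟩
  rw [coeff_X]; split_ifs <;> norm_num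

lemma nn_C {c : ℤ} (hc : 0 < c) : NNStar (C c : ℤ[X]) := by
  refine ⟨fun n => ?_, C_ne_zero.mpr hc.ne'⟩
  rw [coeff_C]; split_ifs <;> omega

lemma dvdN_trans {f g h : ℤ[X]} (h1 : DvdN f g) (h2 : DvdN g h) : DvdN f h := by
  obtain ⟨a, ha, rfl⟩ := h1
  obtain ⟨b, hb, rfl⟩ := h2
  exact ⟨a * b, nn_mul ha hb, by ring⟩

/-- The polynomials which are `X` or a prime number. -/
def GoodN (f : ℤ[X]) : Prop := f = X ∨ ∃ p : ℕ, p.Prime ∧ f = C (p : ℤ)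

lemma good_nn {g : ℤ[X]} (hg : GoodN g) : NNStar g := by
  rcases hg with rfl | ⟨p, hp, rfl⟩
  · exact nn_X
  · exact nn_C (by exact_mod_cast hp.pos)

lemma good_prime {g : ℤ[X]} (hg : GoodN g) : Prime g := by
  rcases hg with rfl | ⟨p, hp, rfl⟩
  · exact prime_X
  · exact Polynomial.prime_C_iff.mpr (Nat.prime_iff_prime_int.mp hp)

lemma good_cancel {g h : ℤ[X]} (hg : GoodN g) (hf : NNStar (g * h)) : NNStar h := by
  refine ⟨fun n => ?_, right_ne_zero_of_mul hf.2⟩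
  rcases hg with rfl | ⟨p, hp, rfl⟩
  · have := hf.1 (n + 1)
    rwa [coeff_X_mul] at this
  · have := hf.1 n
    rw [coeff_C_mul] at this
    have hp' : (0 : ℤ) < p := by exact_mod_cast hp.pos
    exact nonneg_of_mul_nonneg_right this hp'

lemma good_isPrimeN {g : ℤ[X]} (hg : GoodN g) : IsPrimeN g := by
  have hp := good_prime hg
  refine ⟨⟨good_nn hg, hp.ne_one, fun a b ha hb hab => ?_⟩, fun a b ha hb hab => ?_⟩
  · rcases hp.irreducible.isUnit_or_isUnit hab with h | h
    · exact Or.inl (nn_unit ha h)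
    · exact Or.inr (nn_unit hb h)
  · obtain ⟨c, hc, hc'⟩ := hab
    rcases hp.dvd_or_dvd ⟨c, hc'⟩ with ⟨k, rfl⟩ | ⟨k, rfl⟩
    · exact Or.inl ⟨k, good_cancel hg ha, rfl⟩
    · exact Or.inr ⟨k, good_cancel hg hb, rfl⟩

lemma atom_bad {f : ℤ[X]} (hf : IsAtomN f) (hb : ¬ GoodN f) :
    1 ≤ f.natDegree ∧ 1 ≤ f.coeff 0 := by
  have key : ∀ g, GoodN g → ∀ k, f = g * k → False := by
    intro g hg k hk
    have hkn : NNStar k := good_cancel hg (hk ▸ hf.1)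
    rcases hf.2.2 g k (good_nn hg) hkn hk with h | h
    · exact (good_prime hg).ne_one h
    · rw [h, mul_one] at hk
      exact hb (hk ▸ hg)
  constructor
  · by_contra hd
    have hd0 : f.natDegree = 0 := by omega
    have hfc := eq_C_of_natDegree_eq_zero hd0
    obtain ⟨c, hc⟩ := Int.eq_ofNat_of_zero_le (hf.1.1 0)
    rw [hc] at hfc
    have hc1 : c ≠ 1 := by
      rintro rfl
      exact hf.2.1 (by simpa using hfc)
    obtain ⟨p, hp, k, rfl⟩ := Nat.exists_prime_and_dvd hc1
    refine key (C (p : ℤ)) (Or.inr ⟨p, hp, rfl⟩) (C (k : ℤ)) ?_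
    rw [hfc, ← C_mul]; push_cast; rfl
  · by_contra hd
    have h0 : f.coeff 0 = 0 := by have := hf.1.1 0; omega
    obtain ⟨k, hk⟩ := X_dvd_iff.mpr h0
    exact key X (Or.inl rfl) k hk

/-- The auxiliary polynomial `M ∑_{i<N, i≠d} x^i - x^d`. -/
noncomputable def wPoly (M : ℤ) (d N : ℕ) : ℤ[X] :=
  ∑ i ∈ Finset.range N, C (if i = d then -1 else M) * X ^ i

lemma wPoly_coeff (M : ℤ) (d N k : ℕ) :
    (wPoly M d N).coeff k = if k < N then (if k = d then -1 else M) else 0 := by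
  unfold wPoly
  rw [finsetSum_coeff]
  simp only [coeff_C_mul, coeff_X_pow, mul_ite, mul_one, mul_zero]
  rw [Finset.sum_ite_eq]
  simp

lemma wPoly_mul_nn {f : ℤ[X]} (hf : NNPoly f) {M : ℤ} {d N : ℕ} (hD : 1 ≤ f.natDegree)
    (h0 : 1 ≤ f.coeff 0) (hd : f.natDegree ≤ d) (hN : d + f.natDegree < N)
    (hM : ∀ i, f.coeff i ≤ M) : NNPoly (f * wPoly M d N) := by
  intro k
  have hM0 : 1 ≤ M := h0.trans (hM 0)
  have hlead : 1 ≤ f.coeff f.natDegree := by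
    have : f ≠ 0 := by rintro rfl; simp at hD
    exact nn_pos_lead ⟨hf, this⟩
  rw [coeff_mul]
  by_cases hk : d ≤ k ∧ k - d ≤ f.natDegree
  · obtain ⟨hk1, hk2⟩ := hk
    -- a compensating index
    obtain ⟨i, hik, hiN, hid, hfi⟩ : ∃ i, i ≤ k ∧ i < N ∧ i ≠ d ∧ 1 ≤ f.coeff (k - i) := by
      by_cases hj : k = d
      · refine ⟨d - f.natDegree, by omega, by omega, by omega, ?_⟩
        have : k - (d - f.natDegree) = f.natDegree := by omega
        rwa [this]
      · exact ⟨k, le_rfl, by omega, hj, by simpa using h0⟩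
    have hmem1 : (k - i, i) ∈ Finset.HasAntidiagonal.antidiagonal k := by simp; omega
    have hmem2 : (k - d, d) ∈ (Finset.HasAntidiagonal.antidiagonal k).erase (k - i, i) := by
      simp only [Finset.mem_erase, Finset.HasAntidiagonal.mem_antidiagonal, ne_eq, Prod.mk.injEq, not_and]
      exact ⟨fun _ h => hid h.symm, by omega⟩
    rw [← Finset.add_sum_erase _ _ hmem1, ← Finset.add_sum_erase _ _ hmem2]
    have hrest : 0 ≤ ∑ x ∈ ((Finset.HasAntidiagonal.antidiagonal k).erase (k - i, i)).erase (k - d, d),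
        f.coeff x.1 * (wPoly M d N).coeff x.2 := by
      refine Finset.sum_nonneg fun x hx => mul_nonneg (hf _) ?_
      simp only [Finset.mem_erase, Finset.HasAntidiagonal.mem_antidiagonal, ne_eq] at hx
      rw [wPoly_coeff]
      have : x.2 ≠ d := by
        intro h
        apply hx.1
        ext <;> simp <;> omega
      rw [if_neg this]
      split_ifs <;> omega
    have e1 : (wPoly M d N).coeff i = M := by rw [wPoly_coeff, if_pos hiN, if_neg hid]
    have e2 : (wPoly M d N).coeff d = -1 := by
      rw [wPoly_coeff, if_pos (by omega), if_pos rfl]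
    simp only [e1, e2]
    have := hM (k - d)
    nlinarith
  · refine Finset.sum_nonneg fun x hx => ?_
    rw [Finset.HasAntidiagonal.mem_antidiagonal] at hx
    by_cases hxd : x.2 = d
    · have : f.coeff x.1 = 0 := coeff_eq_zero_of_natDegree_lt (by omega)
      simp [this]
    · refine mul_nonneg (hf _) ?_
      rw [wPoly_coeff, if_neg hxd]
      split_ifs <;> omega

/-- The Eisenstein polynomial `x^N + 2 w`. -/
noncomputable def qPoly (M : ℤ) (d N : ℕ) : ℤ[X] := X ^ N + C 2 * wPoly M d N

lemma qPoly_coeff (M : ℤ) (d N k : ℕ) : (qPoly M d N).coeff k =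
    if k < N then 2 * (if k = d then -1 else M) else if k = N then 1 else 0 := by
  unfold qPoly
  rw [coeff_add, coeff_C_mul, wPoly_coeff, coeff_X_pow]
  split_ifs <;> omega

lemma qPoly_natDegree (M : ℤ) (d N : ℕ) : (qPoly M d N).natDegree = N := by
  apply natDegree_eq_of_le_of_coeff_ne_zero
  · rw [natDegree_le_iff_coeff_eq_zero]
    intro k hk
    rw [qPoly_coeff, if_neg (by omega), if_neg (by omega)]
  · rw [qPoly_coeff]; simp

lemma qPoly_monic (M : ℤ) (d N : ℕ) : (qPoly M d N).Monic := by
  unfold Monic leadingCoeff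
  rw [qPoly_natDegree, qPoly_coeff]; simp

lemma qPoly_prime (m : ℤ) (d N : ℕ) (hd : 1 ≤ d) (hN : 1 ≤ N) :
    Prime (qPoly (2 * m + 1) d N) := by
  have hm := qPoly_monic (2 * m + 1) d N
  apply Irreducible.prime
  have h2 : Prime (2 : ℤ) := Int.prime_two
  have hP : (Ideal.span {(2 : ℤ)}).IsPrime :=
    (Ideal.span_singleton_prime h2.ne_zero).mpr h2
  refine irreducible_of_eisenstein_criterion hP ?_ ?_ ?_ ?_ hm.isPrimitive
  · rw [hm.leadingCoeff, Ideal.mem_span_singleton]; norm_num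
  · intro n hn
    have hn' : n < N := by
      have := coe_lt_degree.mp hn
      rwa [qPoly_natDegree] at this
    rw [qPoly_coeff, if_pos hn', Ideal.mem_span_singleton]
    exact dvd_mul_right _ _
  · rw [← natDegree_pos_iff_degree_pos, qPoly_natDegree]; omega
  · rw [qPoly_coeff, if_pos (by omega), if_neg (by omega), Ideal.span_singleton_pow,
      Ideal.mem_span_singleton]
    omega

lemma qPoly_mul_nn {f : ℤ[X]} (hf : NNPoly f) {M : ℤ} {d N : ℕ} (hD : 1 ≤ f.natDegree)
    (h0 : 1 ≤ f.coeff 0) (hd : f.natDegree ≤ d) (hN : d + f.natDegree < N)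
    (hM : ∀ i, f.coeff i ≤ M) : NNStar (f * qPoly M d N) := by
  constructor
  · intro k
    have h1 := wPoly_mul_nn hf hD h0 hd hN hM k
    have : f * qPoly M d N = f * X ^ N + C 2 * (f * wPoly M d N) := by unfold qPoly; ring
    rw [this, coeff_add, coeff_C_mul, coeff_mul_X_pow']
    have h2 : 0 ≤ (if N ≤ k then f.coeff (k - N) else 0) := by
      split_ifs
      · exact hf _
      · exact le_rfl
    omega
  · refine mul_ne_zero ?_ (qPoly_monic M d N).ne_zero
    rintro rfl
    simp at hD

lemma coeff_bound (f : ℤ[X]) : ∃ B : ℤ, ∀ i, f.coeff i ≤ B := by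
  refine ⟨∑ i ∈ f.support, |f.coeff i|, fun i => ?_⟩
  by_cases hi : i ∈ f.support
  · exact (le_abs_self _).trans
      (Finset.single_le_sum (f := fun i => |f.coeff i|) (fun _ _ => abs_nonneg _) hi)
  · rw [notMem_support_iff.mp hi]
    exact Finset.sum_nonneg fun _ _ => abs_nonneg _

lemma exists_linear (s : Finset ℤ[X]) : ∃ p : ℕ, 1 ≤ p ∧ (X + C (p : ℤ) : ℤ[X]) ∉ s := by
  have hinj : Function.Injective (fun p : ℕ => (X + C ((p + 1 : ℕ) : ℤ) : ℤ[X])) := by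
    intro a b hab
    have := C_injective (add_left_cancel hab)
    omega
  obtain ⟨x, ⟨p, rfl⟩, hx⟩ := (Set.infinite_range_of_injective hinj).exists_notMem_finset s
  exact ⟨p + 1, by omega, hx⟩

lemma one_notMem {s : Finset ℤ[X]} (hI : IsPrimeIdealN (genSet s)) : (1 : ℤ[X]) ∉ s := by
  intro h1
  apply hI.2.1
  ext f
  refine ⟨fun h => hI.1 h, fun h => ⟨1, h1, f, h, (one_mul f).symm⟩⟩

open Classical in
lemma atoms_gen {s : Finset ℤ[X]} (hs : ∀ g ∈ s, NNStar g) (hI : IsPrimeIdealN (genSet s)) :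
    genSet s = genSet (s.filter IsAtomN) := by
  ext x
  constructor
  · rintro ⟨g0, hg0, hd0⟩
    obtain ⟨g, ⟨hgs, hgx⟩, hmin⟩ :=
      (IsWellFounded.wf (r := DvdNotUnit (α := ℤ[X]))).has_min
        {g | g ∈ s ∧ DvdN g x} ⟨g0, hg0, hd0⟩
    have aux : ∀ a b, NNStar a → NNStar b → g = a * b → a ∈ genSet s → b = 1 := by
      rintro a b ha hb hab ⟨g', hg', c, hc, rfl⟩
      have hg'x : DvdN g' x := dvdN_trans ⟨c * b, nn_mul hc hb, by rw [hab]; ring⟩ hgx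
      have hn := hmin g' ⟨hg', hg'x⟩
      by_contra hb1
      apply hn
      refine ⟨(hs g' hg').2, c * b, fun hu => hb1 ?_, by rw [hab]; ring⟩
      exact nn_unit hb (isUnit_of_mul_isUnit_right hu)
    refine ⟨g, Finset.mem_filter.mpr ⟨hgs, hs g hgs, ?_, ?_⟩, hgx⟩
    · rintro rfl
      exact one_notMem hI hgs
    · intro a b ha hb hab
      have hgI : a * b ∈ genSet s := ⟨g, hgs, 1, nn_one, by rw [mul_one, hab]⟩
      rcases (hI.2.2 a b ha hb).mp hgI with h | h
      · exact Or.inr (aux a b ha hb hab h)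
      · exact Or.inl (aux b a hb ha (by rw [hab]; ring) h)
  · rintro ⟨g, hg, hd⟩
    exact ⟨g, (Finset.mem_filter.mp hg).1, hd⟩

lemma all_good {s : Finset ℤ[X]} (hs : ∀ g ∈ s, IsAtomN g) (hI : IsPrimeIdealN (genSet s)) :
    ∀ g ∈ s, GoodN g := by
  classical
  by_contra hcon
  push Not at hcon
  obtain ⟨f0, hf0, hb0⟩ := hcon
  obtain ⟨f, hf, hmin⟩ := (s.filter (fun g => ¬ GoodN g)).exists_min_image natDegree
    ⟨f0, Finset.mem_filter.mpr ⟨hf0, hb0⟩⟩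
  obtain ⟨hfs, hfb⟩ := Finset.mem_filter.mp hf
  have hfa := hs f hfs
  obtain ⟨hD, h0⟩ := atom_bad hfa hfb
  obtain ⟨p, hp, hps⟩ := exists_linear s
  have hp' : (1 : ℤ) ≤ p := by exact_mod_cast hp
  set b : ℤ[X] := X + C (p : ℤ) with hb
  have hbdeg : b.natDegree = 1 := natDegree_X_add_C _
  have hb0' : b.coeff 0 = p := by simp [hb]
  have hbnn : NNStar b := by
    refine ⟨fun n => ?_, (monic_X_add_C _).ne_zero⟩
    rw [hb, coeff_add]
    exact add_nonneg (nn_X.1 n) ((nn_C (by omega)).1 n)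
  -- parameters
  obtain ⟨B1, hB1⟩ := coeff_bound f
  obtain ⟨B2, hB2⟩ := coeff_bound b
  set m : ℤ := |B1| + |B2| with hm
  have hM1 : B1 ≤ 2 * m + 1 := by
    have := le_abs_self B1; have := abs_nonneg B1; have := abs_nonneg B2; omega
  have hM2 : B2 ≤ 2 * m + 1 := by
    have := le_abs_self B2; have := abs_nonneg B1; have := abs_nonneg B2; omega
  set d := f.natDegree with hd
  set N := 2 * d + 1 + s.sup natDegree with hN
  set q := qPoly (2 * m + 1) d N with hq
  have hqp : Prime q := qPoly_prime m d N hD (by omega)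
  have hfq : NNStar (f * q) :=
    qPoly_mul_nn hfa.1.1 hD h0 le_rfl (by omega) (fun i => (hB1 i).trans hM1)
  have hbq : NNStar (b * q) :=
    qPoly_mul_nn hbnn.1 (by omega) (by omega) (by omega) (by omega)
      (fun i => (hB2 i).trans hM2)
  have hmem : (f * q) * b ∈ genSet s := ⟨f, hfs, b * q, hbq, by ring⟩
  rcases (hI.2.2 _ _ hfq hbnn).mp hmem with h | h
  · obtain ⟨g, hgs, h, hh, hgh⟩ := h
    have hga := hs g hgs
    have hqg : ¬ q ∣ g := by
      intro hdvd
      have h1 := natDegree_le_of_dvd hdvd hga.1.2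
      have h2 : g.natDegree ≤ s.sup natDegree := Finset.le_sup hgs
      rw [hq, qPoly_natDegree] at h1
      omega
    have hqh : q ∣ h :=
      (hqp.dvd_or_dvd (show q ∣ g * h from hgh ▸ dvd_mul_left q f)).resolve_left hqg
    obtain ⟨k, hk⟩ := hqh
    have hfk : f = g * k := by
      apply mul_right_cancel₀ hqp.ne_zero
      rw [hgh, hk]; ring
    have hk0 : k ≠ 0 := by
      rintro rfl
      exact hfa.1.2 (by simpa using hfk)
    have hknn : NNStar k := by
      by_cases hgg : GoodN g
      · exact good_cancel hgg (hfk ▸ hfa.1)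
      · have h1 := hmin g (Finset.mem_filter.mpr ⟨hgs, hgg⟩)
        have h2 : f.natDegree = g.natDegree + k.natDegree := by
          rw [hfk]; exact natDegree_mul hga.1.2 hk0
        have h3 : k.natDegree = 0 := by omega
        have h4 : f.leadingCoeff = g.leadingCoeff * k.leadingCoeff := by
          rw [hfk]; exact leadingCoeff_mul _ _
        have h5 := nn_pos_lead hfa.1
        have h6 := nn_pos_lead hga.1
        rw [h4] at h5
        have h7 : 0 < k.leadingCoeff := pos_of_mul_pos_right h5 h6.le
        unfold leadingCoeff at h7
        rw [h3] at h7
        rw [eq_C_of_natDegree_eq_zero h3]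
        exact nn_C h7
    rcases hfa.2.2 g k hga.1 hknn hfk with h1 | h1
    · exact hga.2.1 h1
    · rw [h1, mul_one] at hk
      have h2 := hh.1 d
      rw [hk, hq, qPoly_coeff, if_pos (by omega), if_pos rfl] at h2
      omega
  · obtain ⟨g, hgs, h, hh, hgh⟩ := h
    have hirr : Irreducible b := by
      have := (prime_X_sub_C (-(p : ℤ))).irreducible
      rwa [C_neg, sub_neg_eq_add] at this
    rcases hirr.isUnit_or_isUnit hgh with hu | hu
    · exact (hs g hgs).2.1 (nn_unit (hs g hgs).1 hu)
    · rw [nn_unit hh hu, mul_one] at hgh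
      exact hps (hgh ▸ hgs)

/-- A finitely generated ideal of `ℕ₀[x]*` is a prime ideal if and only if it is empty or
generated by a nonempty finite set of prime elements of `ℕ₀[x]*` (i.e. it is one of `(x)`,
`(p₁,…,pₙ)` or `(p₁,…,pₙ,x)` with the `pᵢ` prime numbers). -/
theorem stmt7 (I : Set (Polynomial ℤ))
    (hI : ∃ s : Finset (Polynomial ℤ), (↑s : Set (Polynomial ℤ)) ⊆ NNSet ∧ I = genSet s) :
    IsPrimeIdealN I ↔
      I = ∅ ∨ ∃ s : Finset (Polynomial ℤ), s.Nonempty ∧ (∀ g ∈ s, IsPrimeN g) ∧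
        I = genSet s := by
  classical
  constructor
  · intro hP
    obtain ⟨s, hs, rfl⟩ := hI
    have hs' : ∀ g ∈ s, NNStar g := fun g hg => hs hg
    have heq := atoms_gen hs' hP
    rw [heq] at hP ⊢
    have hgood := all_good (fun g hg => (Finset.mem_filter.mp hg).2) hP
    rcases (s.filter IsAtomN).eq_empty_or_nonempty with he | hne
    · left
      rw [he]
      ext x
      simp [genSet]
    · right
      exact ⟨_, hne, fun g hg => good_isPrimeN (hgood g hg), rfl⟩
  · rintro (rfl | ⟨s, -, hs, rfl⟩)
    · refine ⟨Set.empty_subset _, ?_, by simp⟩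
      intro h
      have : (1 : ℤ[X]) ∈ NNSet := nn_one
      rw [← h] at this
      exact this
    · refine ⟨?_, ?_, fun x y hx hy => ⟨?_, ?_⟩⟩
      · rintro f ⟨g, hg, h, hh, rfl⟩
        exact nn_mul (hs g hg).1.1 hh
      · intro h
        have h1 : (1 : ℤ[X]) ∈ NNSet := nn_one
        rw [← h] at h1
        obtain ⟨g, hg, k, hk, hgk⟩ := h1
        exact (hs g hg).1.2.1 (nn_unit (hs g hg).1.1 (IsUnit.of_mul_eq_one k hgk.symm))
      · rintro ⟨g, hg, hd⟩
        rcases (hs g hg).2 x y hx hy hd with h | h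
        · exact Or.inl ⟨g, hg, h⟩
        · exact Or.inr ⟨g, hg, h⟩
      · rintro (⟨g, hg, hd⟩ | ⟨g, hg, hd⟩)
        · exact ⟨g, hg, dvdN_trans hd ⟨y, hy, rfl⟩⟩
        · exact ⟨g, hg, dvdN_trans hd ⟨x, hx, mul_comm _ _⟩⟩
end
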